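/- Let K = F_2(x)(y) where y satisfies y^2 + (x^3 + x + 1)·y = (x^3 + x + 1)(x^4 + x^3 + x^2 + x + 1) (this quadratic polynomial in y is irreducible over F_2(x)). Then the ideal class group Cl(O_K), where O_K is the integral closure of F_2[x] in K, is cyclic of order 2. -/

import Mathlib

/-!
Write `h = x³ + x + 1` and `g = x⁴ + x³ + x² + x + 1`, so that `y² + hy = hg`.

*The integral closure is `𝔽₂[x] ⊕ 𝔽₂[x]y`* (`exists_integral_coords`): the discriminant is `h²`, and
at the prime `h` the defining equation is Eisenstein because `h ∤ g`.

*There are at most two ideal classes* (`IsQuadraticGenerator.isGood`). Every nonzero ideal is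
`d · (a, y + b)` with `a` dividing the norm `N(y + b) = b² - bh - hg`
(`IsQuadraticGenerator.exists_eq_span_mul_idl`). If `ac = N(y + b)`, then
`(a, y + b)(c, y + b) = (y + b)` (`IsQuadraticGenerator.idl_mul_idl`). Reducing `b` modulo `a` makes
`deg c < deg a` as soon as `deg a ≥ 4`, so induction leaves only `deg a ≤ 3`. The
polynomials `x`, `x + 1`, `x² + x + 1` and `x³ + x² + 1` are inert, hence divide no `N(y + b)`, and
only `a = 1` and `a = h` remain (`eq_one_or_eq_hP`). The case `a = h` gives the ramified prime
`𝔭 = (h, y)`, and `𝔭² = (h)`.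

*The prime `𝔭` is not principal* (`IsQuadraticGenerator.not_isPrincipal_idl`): since `deg (hg) = 7` is
odd and larger than `2 deg h`, the norm of `a + by` with `b ≠ 0` has degree at least `7`
(`natDegree_nrm`), while a generator of `𝔭` would have a norm dividing `h²`. A generator in `𝔽₂[x]`
would divide `y`, hence be a unit.
-/

open Polynomial

/-! ### Arithmetic of the norm form over `𝔽₂[x]` -/

/-- The polynomial `x³ + x + 1`. -/
noncomputable def hP : (ZMod 2)[X] := X ^ 3 + X + 1

/-- The polynomial `x⁴ + x³ + x² + x + 1`. -/
noncomputable def gP : (ZMod 2)[X] := X ^ 4 + X ^ 3 + X ^ 2 + X + 1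

/-- The norm of `a + b y`, where `y² + hy = hg`. -/
noncomputable def nrm (a b : (ZMod 2)[X]) : (ZMod 2)[X] := a ^ 2 - a * b * hP - b ^ 2 * (hP * gP)

lemma two_eq_zero' : (2 : (ZMod 2)[X]) = 0 := CharTwo.two_eq_zero

lemma natDegree_hP : hP.natDegree = 3 := by unfold hP; compute_degree!
lemma natDegree_gP : gP.natDegree = 4 := by unfold gP; compute_degree!
lemma hP_ne_zero : hP ≠ 0 := fun h => by simpa [h] using natDegree_hP
lemma gP_ne_zero : gP ≠ 0 := fun h => by simpa [h] using natDegree_gP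

lemma prime_hP : Prime hP := by
  rw [← irreducible_iff_prime]
  rw [irreducible_iff_roots_eq_zero_of_degree_le_three (by rw [natDegree_hP]; norm_num)
    (by rw [natDegree_hP])]
  refine Multiset.eq_zero_of_forall_notMem fun r hr => ?_
  have h0 : r ^ 3 + r + 1 = 0 := by simpa [hP, IsRoot] using isRoot_of_mem_roots hr
  clear hr
  revert r; decide

lemma isCoprime_hP_gP : IsCoprime hP gP := by
  refine ⟨1 + (X + 1) * (X ^ 2 + 1), - (X ^ 2 + 1), ?_⟩
  unfold hP gP
  linear_combination (X + X ^ 3) * two_eq_zero'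

lemma not_hP_dvd_gP : ¬ hP ∣ gP := fun h =>
  prime_hP.not_isUnit (isCoprime_hP_gP.isUnit_of_dvd' dvd_rfl h)

/-- The degrees of `a²` and `b²hg` have different parities, and `abh` never reaches the larger one. -/
lemma natDegree_nrm (a b : (ZMod 2)[X]) (hb : b ≠ 0) : 7 ≤ (nrm a b).natDegree := by
  have h1 : (b ^ 2 * (hP * gP)).natDegree = 2 * b.natDegree + 7 := by
    rw [natDegree_mul (pow_ne_zero _ hb) (mul_ne_zero hP_ne_zero gP_ne_zero),
      natDegree_mul hP_ne_zero gP_ne_zero, natDegree_pow, natDegree_hP, natDegree_gP]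
  have h2 : (a * b * hP).natDegree ≤ a.natDegree + b.natDegree + 3 := by
    refine natDegree_mul_le.trans ?_
    rw [natDegree_hP]
    gcongr
    exact natDegree_mul_le
  have h3 : (a ^ 2).natDegree = 2 * a.natDegree := natDegree_pow _ _
  unfold nrm
  rcases le_or_gt (b.natDegree + 4) a.natDegree with h | h
  · rw [natDegree_sub_eq_left_of_natDegree_lt, natDegree_sub_eq_left_of_natDegree_lt, h3]
    · omega
    · omega
    · rw [natDegree_sub_eq_left_of_natDegree_lt] <;> omega
  · rw [natDegree_sub_eq_right_of_natDegree_lt, h1]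
    · omega
    · refine (natDegree_sub_le _ _).trans_lt ?_
      rw [h1, max_lt_iff]
      omega

lemma nrm_one_ne_zero (b : (ZMod 2)[X]) : nrm b 1 ≠ 0 := fun h => by
  simpa [h] using natDegree_nrm b 1 one_ne_zero

lemma natDegree_nrm_one_le (b : (ZMod 2)[X]) (n : ℕ) (hn : 4 ≤ n) (hb : b.natDegree < n) :
    (nrm b 1).natDegree < 2 * n := by
  have h1 : (hP * gP).natDegree = 7 := by
    rw [natDegree_mul hP_ne_zero gP_ne_zero, natDegree_hP, natDegree_gP]
  have h2 : (b * hP).natDegree ≤ b.natDegree + 3 := by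
    refine natDegree_mul_le.trans ?_
    rw [natDegree_hP]
  have h3 : (b ^ 2).natDegree = 2 * b.natDegree := natDegree_pow _ _
  unfold nrm
  simp only [mul_one, one_pow, one_mul]
  refine (natDegree_sub_le _ _).trans_lt (max_lt ((natDegree_sub_le _ _).trans_lt (max_lt ?_ ?_)) ?_)
    <;> omega


lemma pow_two_pow_eq_eval (b : (ZMod 2)[X]) (n : ℕ) :
    b ^ 2 ^ n = eval (X ^ 2 ^ n) (b.map C) := by
  rw [eval_map]
  induction b using Polynomial.induction_on' with
  | add p q hp hq => rw [add_pow_char_pow, eval₂_add, hp, hq]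
  | monomial m a =>
    have ha : ∀ a : ZMod 2, a ^ 2 ^ n = a := fun a => ZMod.pow_card_pow (p := 2) a
    rw [eval₂_monomial, monomial_pow, ha, ← C_mul_X_pow_eq_monomial]
    ring

/-- Fermat's little theorem for the quotients of `𝔽₂[X]`. -/
lemma X_pow_sub_X_dvd (b : (ZMod 2)[X]) (k : ℕ) :
    (X ^ 2 ^ k - X : (ZMod 2)[X]) ∣ b ^ 2 ^ k - b := by
  have h := Polynomial.sub_dvd_eval_sub (X ^ 2 ^ k : (ZMod 2)[X]) X (b.map C)
  have h0 : b = eval X (b.map C) := by simpa using pow_two_pow_eq_eval b 0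
  rwa [← pow_two_pow_eq_eval, ← h0] at h

/-- If `y² + hy = hg` has a root `b` in the residue field `𝔽₄`, then `b⁴ = h³b + h³g + h²g²`; there
`b⁴ = b` and `h³ = 1`, so that `h³g + h²g² = x` would vanish. -/
lemma not_dvd_nrm_quadratic (b : (ZMod 2)[X]) : ¬ X ^ 2 + X + 1 ∣ nrm b 1 := by
  intro h
  have h1 : (X ^ 2 + X + 1 : (ZMod 2)[X]) ∣ b ^ 4 - b :=
    dvd_trans ⟨X ^ 2 + X, by grind⟩ (X_pow_sub_X_dvd b 2)
  have h2 : (X ^ 2 + X + 1 : (ZMod 2)[X]) ∣ hP ^ 3 - 1 :=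
    ⟨X^7+X^6+X^5+X^4+X^3+X, by unfold hP; grind⟩
  have h3 : (X ^ 2 + X + 1 : (ZMod 2)[X]) ∣ hP ^ 3 * gP + hP ^ 2 * gP ^ 2 - X :=
    ⟨X^12+X^10+X^9+X^8+X^6+X^4+X, by unfold hP gP; grind⟩
  have h4 : (X : (ZMod 2)[X]) = (b ^ 4 - b) - (hP ^ 3 - 1) * b -
      (hP ^ 3 * gP + hP ^ 2 * gP ^ 2 - X) - nrm b 1 * (hP ^ 2 + nrm b 1) := by
    unfold nrm
    generalize hP = h at *
    generalize gP = g at *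
    grind
  have h5 : (X ^ 2 + X + 1 : (ZMod 2)[X]) ∣ X := by
    have := dvd_sub (dvd_sub (dvd_sub h1 (h2.mul_right b)) h3)
      (h.mul_right (hP ^ 2 + nrm b 1))
    rwa [← h4] at this
  have h6 := natDegree_le_of_dvd h5 X_ne_zero
  have h7 : (X ^ 2 + X + 1 : (ZMod 2)[X]).natDegree = 2 := by compute_degree!
  rw [h7, natDegree_X] at h6
  omega

/-- The same argument in `𝔽₈`: there `b⁸ = h⁷b + h⁷g + h⁶g² + h⁴g⁴`, with `b⁸ = b` and `h⁷ = 1`, and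
`h⁷g + h⁶g² + h⁴g⁴ = x² + x` does not vanish. -/
lemma not_dvd_nrm_cubic (b : (ZMod 2)[X]) : ¬ X ^ 3 + X ^ 2 + 1 ∣ nrm b 1 := by
  intro h
  have h1 : (X ^ 3 + X ^ 2 + 1 : (ZMod 2)[X]) ∣ b ^ 8 - b :=
    dvd_trans ⟨X^5+X^4+X^3+X, by grind⟩ (X_pow_sub_X_dvd b 3)
  have h2 : (X ^ 3 + X ^ 2 + 1 : (ZMod 2)[X]) ∣ hP ^ 7 - 1 :=
    ⟨X^18+X^17+X^11+X^10+X^4+X^3+X^2+X, by unfold hP; grind⟩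
  have h3 : (X ^ 3 + X ^ 2 + 1 : (ZMod 2)[X]) ∣
      hP ^ 7 * gP + hP ^ 6 * gP ^ 2 + hP ^ 4 * gP ^ 4 - (X ^ 2 + X) :=
    ⟨X^25+X^24+X^19+X^18+X^17+X^16+X^15+X^13+X^12+X^8+X^6+X^5+X^4+X^3+X^2+X+1, by
      unfold hP gP; grind⟩
  have h4 : (X ^ 2 + X : (ZMod 2)[X]) = (b ^ 8 - b) - (hP ^ 7 - 1) * b -
      (hP ^ 7 * gP + hP ^ 6 * gP ^ 2 + hP ^ 4 * gP ^ 4 - (X ^ 2 + X)) -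
      nrm b 1 * (hP ^ 6 + hP ^ 4 * nrm b 1 + nrm b 1 ^ 3) := by
    unfold nrm
    generalize hP = h at *
    generalize gP = g at *
    grind
  have h5 : (X ^ 3 + X ^ 2 + 1 : (ZMod 2)[X]) ∣ X ^ 2 + X := by
    rw [h4]
    exact dvd_sub (dvd_sub (dvd_sub h1 (h2.mul_right _)) h3) (h.mul_right _)
  have h8 : (X ^ 2 + X : (ZMod 2)[X]).natDegree = 2 := by compute_degree!
  have h6 := natDegree_le_of_dvd h5 (fun h => by simp [h] at h8)
  have h7 : (X ^ 3 + X ^ 2 + 1 : (ZMod 2)[X]).natDegree = 3 := by compute_degree!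
  omega

lemma eval_nrm_ne_zero (b : (ZMod 2)[X]) (r : ZMod 2) : eval r (nrm b 1) ≠ 0 := by
  have : eval r (nrm b 1) = (eval r b) ^ 2 - (eval r b) * (r ^ 3 + r + 1)
      - (r ^ 3 + r + 1) * (r ^ 4 + r ^ 3 + r ^ 2 + r + 1) := by
    simp [nrm, hP, gP]
  rw [this]
  clear this
  generalize eval r b = s
  revert r s
  decide

/-- The only divisors of degree at most `3` of the norms of the elements `b + y` are `1` and
`x³ + x + 1`: the other primes of degree at most `3` are inert. -/
lemma eq_one_or_eq_hP (a b : (ZMod 2)[X]) (ha : a.natDegree < 4) (h : a ∣ nrm b 1) :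
    a = 1 ∨ a = hP := by
  have hr : ∀ r : ZMod 2, eval r a ≠ 0 := fun r h0 =>
    eval_nrm_ne_zero b r (zero_dvd_iff.1 (h0 ▸ eval_dvd h))
  have e := a.as_sum_range_C_mul_X_pow' ha
  simp only [Finset.sum_range_succ, Finset.sum_range_zero, zero_add] at e
  have e0 := hr 0
  have e1 := hr 1
  generalize a.coeff 0 = a0 at e
  generalize a.coeff 1 = a1 at e
  generalize a.coeff 2 = a2 at e
  generalize a.coeff 3 = a3 at e
  rw [e] at e0 e1
  simp only [eval_add, eval_mul, eval_C, eval_pow, eval_X] at e0 e1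
  -- nonvanishing at `0` and `1` forces constant coefficient `1` and an odd number of terms
  have cases : (a0 = 1 ∧ a1 = 0 ∧ a2 = 0 ∧ a3 = 0) ∨ (a0 = 1 ∧ a1 = 1 ∧ a2 = 1 ∧ a3 = 0) ∨
      (a0 = 1 ∧ a1 = 1 ∧ a2 = 0 ∧ a3 = 1) ∨ (a0 = 1 ∧ a1 = 0 ∧ a2 = 1 ∧ a3 = 1) := by
    clear e
    revert a0 a1 a2 a3
    decide
  rcases cases with ⟨rfl, rfl, rfl, rfl⟩ | ⟨rfl, rfl, rfl, rfl⟩ | ⟨rfl, rfl, rfl, rfl⟩ |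
    ⟨rfl, rfl, rfl, rfl⟩
  · left; simp [e]
  · refine absurd ?_ (not_dvd_nrm_quadratic b)
    convert h using 1
    rw [e]; simp; ring
  · right; rw [e, hP]; simp; ring
  · refine absurd ?_ (not_dvd_nrm_cubic b)
    convert h using 1
    rw [e]; simp; ring

/-! ### Ideal classes of `𝔽₂[x] ⊕ 𝔽₂[x]θ` -/

section IdealClasses

variable {R : Type*} [CommRing R] [Algebra (ZMod 2)[X] R]

local notation "φ" => algebraMap (ZMod 2)[X] R

/-- `1, θ` is an `𝔽₂[x]`-basis of `R` and `θ` is a root of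
`Y² + (x³ + x + 1) Y - (x³ + x + 1)(x⁴ + x³ + x² + x + 1)`. -/
structure IsQuadraticGenerator (θ : R) : Prop where
  rel : θ ^ 2 + algebraMap (ZMod 2)[X] R hP * θ
    - algebraMap (ZMod 2)[X] R hP * algebraMap (ZMod 2)[X] R gP = 0
  span : ∀ z : R, ∃ a b : (ZMod 2)[X],
    z = algebraMap (ZMod 2)[X] R a + algebraMap (ZMod 2)[X] R b * θ
  indep : ∀ a b : (ZMod 2)[X],
    algebraMap (ZMod 2)[X] R a + algebraMap (ZMod 2)[X] R b * θ = 0 → a = 0 ∧ b = 0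

/-- The ideal `(a, θ + b)`. The prime above `x³ + x + 1` is `idl θ hP 0`. -/
def idl (θ : R) (a b : (ZMod 2)[X]) : Ideal R :=
  Ideal.span {algebraMap (ZMod 2)[X] R a, θ + algebraMap (ZMod 2)[X] R b}

/-- The class of `I` is trivial or equal to the class of the ramified prime `(x³ + x + 1, θ)`. -/
def IsGood (θ : R) (I : Ideal R) : Prop :=
  (∃ x y : R, x ≠ 0 ∧ y ≠ 0 ∧ Ideal.span {x} * I = Ideal.span {y}) ∨
  (∃ x y : R, x ≠ 0 ∧ y ≠ 0 ∧ Ideal.span {x} * I = Ideal.span {y} * idl θ hP 0)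

namespace IsQuadraticGenerator

variable {θ : R} (hθ : IsQuadraticGenerator θ)
include hθ

lemma injective : Function.Injective (algebraMap (ZMod 2)[X] R) := by
  rw [injective_iff_map_eq_zero]
  intro a ha
  exact (hθ.indep a 0 (by simp [ha])).1

lemma mul_conj (b : (ZMod 2)[X]) : (θ + φ b) * (φ b - φ hP - θ) = φ (nrm b 1) := by
  simp only [nrm, map_sub, map_mul, map_pow, map_one]
  linear_combination -hθ.rel

lemma theta_add_ne_zero (b : (ZMod 2)[X]) : θ + φ b ≠ 0 := by
  intro h
  have := (hθ.indep b 1 (by rw [map_one, one_mul, add_comm, h])).2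
  exact one_ne_zero this

omit hθ in
lemma two_eq_zero_R : (2 : R) = 0 := by
  have := congrArg φ two_eq_zero'
  rwa [map_ofNat, map_zero] at this

lemma idl_mul_idl_of_not_dvd {a b c : (ZMod 2)[X]} (h : a * c = nrm b 1) (ha : ¬ hP ∣ a) :
    idl θ a b * idl θ c b = Ideal.span {θ + φ b} := by
  have hac : φ a * φ c = (θ + φ b) * (φ b - φ hP - θ) := by rw [hθ.mul_conj, ← h, map_mul]
  have a1 : φ a ∈ idl θ a b := Ideal.subset_span (by simp)
  have a2 : θ + φ b ∈ idl θ a b := Ideal.subset_span (by simp)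
  have c1 : φ c ∈ idl θ c b := Ideal.subset_span (by simp)
  have c2 : θ + φ b ∈ idl θ c b := Ideal.subset_span (by simp)
  apply le_antisymm
  · rw [idl, idl, Ideal.span_pair_mul_span_pair, Ideal.span_le]
    rintro z (rfl | rfl | rfl | rfl)
    · exact Ideal.mem_span_singleton.2 ⟨_, hac⟩
    · exact Ideal.mem_span_singleton.2 ⟨φ a, mul_comm _ _⟩
    · exact Ideal.mem_span_singleton.2 ⟨_, rfl⟩
    · exact Ideal.mem_span_singleton.2 ⟨_, rfl⟩
  · rw [Ideal.span_singleton_le_iff_mem]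
    obtain ⟨u, v, huv⟩ := (prime_hP.irreducible.coprime_iff_not_dvd).2 ha
    have e : φ u * φ hP + φ v * φ a = 1 := by rw [← map_mul, ← map_mul, ← map_add, huv, map_one]
    have key : θ + φ b = φ v * (φ a * (θ + φ b)) - φ u * (φ a * φ c)
        - φ u * ((θ + φ b) * (θ + φ b)) := by
      linear_combination (-(θ + φ b)) * e + φ u * hac
        + φ u * (θ + φ b) * φ b * two_eq_zero_R (R := R)
    rw [key]
    exact sub_mem (sub_mem (Ideal.mul_mem_left _ _ (Ideal.mul_mem_mul a1 c2))
      (Ideal.mul_mem_left _ _ (Ideal.mul_mem_mul a1 c1)))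
      (Ideal.mul_mem_left _ _ (Ideal.mul_mem_mul a2 c2))

omit hθ in
/-- Otherwise `h² ∣ b² - bh - hg`, so `h ∣ b` and then `h ∣ g`. -/
lemma not_dvd_and_dvd {a b c : (ZMod 2)[X]} (h : a * c = nrm b 1) (ha : hP ∣ a) : ¬ hP ∣ c := by
  intro hc
  obtain ⟨a, rfl⟩ := ha
  obtain ⟨c, rfl⟩ := hc
  simp only [nrm, mul_one, one_pow, one_mul] at h
  have hb : hP ∣ b := prime_hP.dvd_of_dvd_pow (n := 2) ⟨hP * a * c + b + gP, by
    linear_combination -h⟩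
  obtain ⟨b, rfl⟩ := hb
  refine not_hP_dvd_gP ⟨b ^ 2 - b - a * c, mul_left_cancel₀ hP_ne_zero ?_⟩
  linear_combination h

/-- The classes of `(a, θ + b)` and `(c, θ + b)` are inverse to each other if `ac` is the norm
of `θ + b`. -/
lemma idl_mul_idl {a b c : (ZMod 2)[X]} (h : a * c = nrm b 1) :
    idl θ a b * idl θ c b = Ideal.span {θ + φ b} := by
  by_cases ha : hP ∣ a
  · rw [mul_comm]
    exact hθ.idl_mul_idl_of_not_dvd (by rw [mul_comm, h]) (not_dvd_and_dvd h ha)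
  · exact hθ.idl_mul_idl_of_not_dvd h ha

/-- `(h, θ)² = (h)`, because `θ² = h(g - θ)` and `h`, `g` are coprime. -/
lemma idl_hP_sq : idl θ hP 0 * idl θ hP 0 = Ideal.span {φ hP} := by
  have a1 : φ hP ∈ idl θ hP 0 := Ideal.subset_span (by simp)
  have a2 : θ ∈ idl θ hP 0 := Ideal.subset_span (by simp)
  have r := hθ.rel
  apply le_antisymm
  · rw [idl, Ideal.span_pair_mul_span_pair, Ideal.span_le, map_zero, add_zero]
    rintro z (rfl | rfl | rfl | rfl)
    · exact Ideal.mem_span_singleton.2 ⟨_, rfl⟩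
    · exact Ideal.mem_span_singleton.2 ⟨_, rfl⟩
    · exact Ideal.mem_span_singleton.2 ⟨θ, mul_comm _ _⟩
    · exact Ideal.mem_span_singleton.2 ⟨φ gP - θ, by linear_combination r⟩
  · rw [Ideal.span_singleton_le_iff_mem]
    obtain ⟨u, v, huv⟩ := isCoprime_hP_gP
    have e : φ u * φ hP + φ v * φ gP = 1 := by rw [← map_mul, ← map_mul, ← map_add, huv, map_one]
    have key : φ hP = φ u * (φ hP * φ hP) + (φ v * (θ * θ) + φ v * (φ hP * θ)) := by
      linear_combination (-φ hP) * e - φ v * r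
    rw [key]
    exact add_mem (Ideal.mul_mem_left _ _ (Ideal.mul_mem_mul a1 a1))
      (add_mem (Ideal.mul_mem_left _ _ (Ideal.mul_mem_mul a2 a2))
        (Ideal.mul_mem_left _ _ (Ideal.mul_mem_mul a1 a2)))

/-- The Hermite normal form of an ideal: `d` generates the ideal of all `θ`-coefficients, and `d * a`
the intersection with `𝔽₂[x]`. -/
lemma exists_eq_span_mul_idl (J : Ideal R) (hJ : J ≠ ⊥) :
    ∃ d a b : (ZMod 2)[X], d ≠ 0 ∧ a ∣ nrm b 1 ∧ J = Ideal.span {φ d} * idl θ a b := by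
  have r := hθ.rel
  let D : Ideal (ZMod 2)[X] :=
    { carrier := {β | ∃ α, φ α + φ β * θ ∈ J}
      zero_mem' := ⟨0, by simp⟩
      add_mem' := by
        rintro β β' ⟨α, h⟩ ⟨α', h'⟩
        refine ⟨α + α', ?_⟩
        convert add_mem h h' using 1
        simp only [map_add]; ring
      smul_mem' := by
        rintro c β ⟨α, h⟩
        refine ⟨c * α, ?_⟩
        convert J.mul_mem_left (φ c) h using 1
        simp only [smul_eq_mul, map_mul]; ring }
  have memD : ∀ β, β ∈ D ↔ ∃ α, φ α + φ β * θ ∈ J := fun β => Iff.rfl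
  obtain ⟨d, hd⟩ := (IsPrincipalIdealRing.principal D).principal
  obtain ⟨m, hm⟩ := (IsPrincipalIdealRing.principal (J.comap φ)).principal
  have hd' : ∀ β, d ∣ β ↔ ∃ α, φ α + φ β * θ ∈ J := fun β => by
    rw [← memD, hd]; exact Ideal.mem_span_singleton.symm
  have hm' : ∀ β, m ∣ β ↔ φ β ∈ J := fun β => by
    rw [← Ideal.mem_comap, hm]; exact Ideal.mem_span_singleton.symm
  obtain ⟨e, he⟩ := (hd' d).1 dvd_rfl
  have dm : d ∣ m := (hd' m).2 ⟨0, by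
    rw [map_zero, zero_add]; exact J.mul_mem_right _ ((hm' m).1 dvd_rfl)⟩
  have de : d ∣ e := by
    have : d ∣ e - d * hP := (hd' _).2 ⟨d * hP * gP, by
      convert J.mul_mem_right θ he using 1
      simp only [map_sub, map_mul]
      linear_combination -φ d * r⟩
    simpa using dvd_add this (dvd_mul_right d hP)
  obtain ⟨a, rfl⟩ := dm
  obtain ⟨b, rfl⟩ := de
  have hd0 : d ≠ 0 := by
    rintro rfl
    obtain ⟨z, hz, hz0⟩ := Submodule.exists_mem_ne_zero_of_ne_bot hJ
    obtain ⟨α, β, rfl⟩ := hθ.span z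
    have hβ : β = 0 := zero_dvd_iff.1 ((hd' β).2 ⟨α, hz⟩)
    have hα : α = 0 := zero_dvd_iff.1 ((hd' α).2 ⟨0, by
      convert J.mul_mem_right θ hz using 1
      simp [hβ]⟩)
    exact hz0 (by simp [hα, hβ])
  refine ⟨d, a, b, hd0, ?_, ?_⟩
  · have : d * a ∣ d * nrm b 1 := (hm' _).2 (by
      convert J.mul_mem_right (φ b - φ hP - θ) he using 1
      rw [map_mul, ← hθ.mul_conj, map_mul]
      ring)
    exact (mul_dvd_mul_iff_left hd0).1 this
  · apply le_antisymm
    · intro z hz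
      obtain ⟨α, β, rfl⟩ := hθ.span z
      obtain ⟨k, rfl⟩ := (hd' β).2 ⟨α, hz⟩
      obtain ⟨t, ht⟩ := (hm' (α - k * (d * b))).2 (by
        convert sub_mem hz (J.mul_mem_left (φ k) he) using 1
        simp only [map_sub, map_mul]
        ring)
      have : φ α = φ k * (φ d * φ b) + φ d * φ a * φ t := by
        simp only [← map_mul, ← map_add]
        congr 1
        linear_combination ht
      rw [Ideal.mem_span_singleton_mul]
      refine ⟨φ t * φ a + φ k * (θ + φ b), Ideal.mem_span_pair.2 ⟨_, _, rfl⟩, ?_⟩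
      rw [this, map_mul]
      ring
    · rw [Ideal.span_singleton_mul_le_iff]
      intro z hz
      obtain ⟨s, t, rfl⟩ := Ideal.mem_span_pair.1 hz
      have h1 := (hm' _).1 (dvd_refl (d * a))
      convert add_mem (J.mul_mem_left s h1) (J.mul_mem_left t he) using 1
      simp only [map_mul]
      ring

omit hθ in
lemma idl_congr {a b b' : (ZMod 2)[X]} (h : a ∣ b - b') : idl θ a b = idl θ a b' := by
  obtain ⟨q, hq⟩ := h
  have : θ + φ b = θ + φ b' + φ q * φ a := by
    rw [add_assoc, ← map_mul, ← map_add]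
    congr 2
    linear_combination hq
  rw [idl, idl, this, Ideal.span_pair_add_mul_left]

/-- Up to principal ideals, `I` is inverse to `J`, and the ramified prime is its own inverse. -/
lemma isGood_of_mul [IsDomain R] {I J : Ideal R} {t : R} (ht : t ≠ 0)
    (h : I * J = Ideal.span {t}) (hJ : IsGood θ J) : IsGood θ I := by
  have h0 : φ hP ≠ 0 := fun h => hP_ne_zero (hθ.injective (by rw [h, map_zero]))
  rcases hJ with ⟨x, y, hx, hy, e⟩ | ⟨x, y, hx, hy, e⟩
  · refine Or.inl ⟨y, x * t, hy, mul_ne_zero hx ht, ?_⟩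
    rw [← e, ← Ideal.span_singleton_mul_span_singleton, ← h]
    ring
  · refine Or.inr ⟨y * φ hP, x * t, mul_ne_zero hy h0, mul_ne_zero hx ht, ?_⟩
    rw [← Ideal.span_singleton_mul_span_singleton, ← Ideal.span_singleton_mul_span_singleton, ← h,
      ← hθ.idl_hP_sq]
    calc _ = I * idl θ hP 0 * (Ideal.span {y} * idl θ hP 0) := by ring
      _ = I * idl θ hP 0 * (Ideal.span {x} * J) := by rw [e]
      _ = _ := by ring

omit hθ in
lemma isGood_span_mul [IsDomain R] {I : Ideal R} {d : R} (hd : d ≠ 0) (hI : IsGood θ I) :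
    IsGood θ (Ideal.span {d} * I) := by
  rcases hI with ⟨x, y, hx, hy, e⟩ | ⟨x, y, hx, hy, e⟩
  · refine Or.inl ⟨x, d * y, hx, mul_ne_zero hd hy, ?_⟩
    rw [← Ideal.span_singleton_mul_span_singleton, ← e, mul_left_comm]
  · refine Or.inr ⟨x, d * y, hx, mul_ne_zero hd hy, ?_⟩
    rw [← Ideal.span_singleton_mul_span_singleton, mul_assoc, ← e, mul_left_comm]

/-- Reduction of the ideals `(a, θ + b)`: as long as `deg a ≥ 4`, replacing `b` by its remainder
modulo `a` and passing to the cofactor of `a` in the norm of `θ + b` lowers the degree of `a`. -/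
lemma isGood_idl [IsDomain R] (n : ℕ) : ∀ a b : (ZMod 2)[X], a.natDegree = n → a ∣ nrm b 1 →
    IsGood θ (idl θ a b) := by
  induction n using Nat.strong_induction_on with
  | _ n ih =>
    intro a b ha h
    rcases lt_or_ge n 4 with hn | hn
    · rcases eq_one_or_eq_hP a b (by omega) h with rfl | rfl
      · refine Or.inl ⟨1, 1, one_ne_zero, one_ne_zero, ?_⟩
        have : idl θ 1 b = ⊤ :=
          Ideal.eq_top_of_isUnit_mem _ (Ideal.subset_span (Set.mem_insert _ _)) (by simp)
        simp [this]
      · refine Or.inr ⟨1, 1, one_ne_zero, one_ne_zero, ?_⟩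
        congr 1
        apply idl_congr
        obtain ⟨q, hq⟩ := h
        rw [sub_zero]
        refine prime_hP.dvd_of_dvd_pow (n := 2) ⟨q + b + gP, ?_⟩
        simp only [nrm] at hq
        linear_combination hq
    · have e1 : a ∣ b - b % a := ⟨b / a, by
        linear_combination -EuclideanDomain.div_add_mod b a⟩
      rw [idl_congr e1]
      have hb : (b % a).natDegree < n := ha ▸ natDegree_mod_lt b (by omega)
      have h' : a ∣ nrm (b % a) 1 := by
        have : a ∣ nrm b 1 - nrm (b % a) 1 := by
          obtain ⟨q, hq⟩ := e1
          refine ⟨q * (b + b % a - hP), ?_⟩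
          simp only [nrm]
          linear_combination (b + b % a - hP) * hq
        simpa using dvd_sub h this
      obtain ⟨c, hc⟩ := h'
      have hne := nrm_one_ne_zero (b % a)
      have hdeg := natDegree_nrm_one_le _ n hn hb
      have hc0 : a * c ≠ 0 := hc ▸ hne
      rw [hc, natDegree_mul (left_ne_zero_of_mul hc0) (right_ne_zero_of_mul hc0), ha] at hdeg
      exact hθ.isGood_of_mul (hθ.theta_add_ne_zero _) (hθ.idl_mul_idl hc.symm)
        (ih c.natDegree (by omega) c _ rfl (hc ▸ dvd_mul_left c a))

lemma isGood [IsDomain R] (J : Ideal R) (hJ : J ≠ ⊥) : IsGood θ J := by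
  obtain ⟨d, a, b, hd, h, rfl⟩ := hθ.exists_eq_span_mul_idl J hJ
  exact isGood_span_mul (fun h => hd (hθ.injective (by rw [h, map_zero])))
    (hθ.isGood_idl _ a b rfl h)

/-- A generator of the ramified prime has norm dividing `h²`, of degree less than `7`, so it lies in
`𝔽₂[x]`. As it divides `θ` it is a unit, while every element of the ideal has its first coordinate
divisible by `h`. -/
lemma not_isPrincipal_idl : ¬ (idl θ hP 0).IsPrincipal := by
  rintro ⟨z, hz⟩
  have r := hθ.rel
  have coeffs : ∀ a b c d : (ZMod 2)[X], φ a + φ b * θ = φ c + φ d * θ → a = c ∧ b = d := by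
    intro a b c d h
    have := hθ.indep (a - c) (b - d) (by simp only [map_sub]; linear_combination h)
    exact ⟨sub_eq_zero.1 this.1, sub_eq_zero.1 this.2⟩
  have m1 : φ hP ∈ idl θ hP 0 := Ideal.subset_span (by simp)
  have m2 : θ ∈ idl θ hP 0 := Ideal.subset_span (by simp)
  have mz : z ∈ idl θ hP 0 := hz ▸ Submodule.mem_span_singleton_self z
  rw [hz] at m1 m2
  obtain ⟨w, hw⟩ := Ideal.mem_span_singleton.1 m1
  obtain ⟨w', hw'⟩ := Ideal.mem_span_singleton.1 m2
  obtain ⟨a, b, rfl⟩ := hθ.span z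
  obtain ⟨c, d, rfl⟩ := hθ.span w
  obtain ⟨c', d', rfl⟩ := hθ.span w'
  obtain ⟨h1, h2⟩ := coeffs hP 0 (a * c + b * d * (hP * gP)) (a * d + b * c - b * d * hP) (by
    simp only [map_add, map_sub, map_mul, map_zero]
    linear_combination hw + φ b * φ d * r)
  have hN : nrm a b * nrm c d = hP ^ 2 := by
    have : nrm a b * nrm c d
        = nrm (a * c + b * d * (hP * gP)) (a * d + b * c - b * d * hP) := by
      unfold nrm; ring
    rw [this, ← h1, ← h2]
    simp [nrm]
  have hN0 : nrm a b * nrm c d ≠ 0 := hN ▸ pow_ne_zero _ hP_ne_zero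
  have hb : b = 0 := by
    by_contra hb
    have h3 := natDegree_nrm a b hb
    have h4 := congrArg natDegree hN
    rw [natDegree_mul (left_ne_zero_of_mul hN0) (right_ne_zero_of_mul hN0), natDegree_pow,
      natDegree_hP] at h4
    omega
  subst hb
  obtain ⟨-, h4⟩ := coeffs 0 1 (a * c') (a * d') (by
    simp only [map_mul, map_zero, map_one]
    simp only [map_zero] at hw'
    linear_combination hw')
  obtain ⟨s, t, hst⟩ := Ideal.mem_span_pair.1 mz
  obtain ⟨s0, s1, rfl⟩ := hθ.span s
  obtain ⟨t0, t1, rfl⟩ := hθ.span t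
  obtain ⟨h5, -⟩ := coeffs a 0 (hP * (s0 + t1 * gP)) (s1 * hP + t0 - t1 * hP) (by
    simp only [map_add, map_sub, map_mul, map_zero] at hst ⊢
    linear_combination -hst + φ t1 * r)
  exact prime_hP.not_isUnit (isUnit_of_dvd_one ⟨(s0 + t1 * gP) * d', by rw [h4, h5]; ring⟩)

lemma card_classGroup [IsDedekindDomain R] : Nat.card (ClassGroup R) = 2 := by
  have hp : idl θ hP 0 ≠ ⊥ := fun h => hθ.not_isPrincipal_idl (h ▸ inferInstance)
  refine Nat.card_eq_two_iff.2
    ⟨1, ClassGroup.mk0 ⟨_, mem_nonZeroDivisors_of_ne_zero hp⟩, ?_, ?_⟩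
  · rw [ne_comm, Ne, ClassGroup.mk0_eq_one_iff]
    exact hθ.not_isPrincipal_idl
  · refine Set.eq_univ_of_forall fun c => ?_
    obtain ⟨⟨J, hJ⟩, rfl⟩ := ClassGroup.mk0_surjective c
    rcases hθ.isGood J (nonZeroDivisors.ne_zero hJ) with ⟨x, y, hx, hy, e⟩ | ⟨x, y, hx, hy, e⟩
    · left
      rw [← map_one ClassGroup.mk0]
      exact ClassGroup.mk0_eq_mk0_iff.2 ⟨x, y, hx, hy, by simpa using e⟩
    · right
      exact ClassGroup.mk0_eq_mk0_iff.2 ⟨x, y, hx, hy, e⟩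

end IsQuadraticGenerator
end IdealClasses

/-! ### The integral closure of `𝔽₂[x]` -/

section FunctionField

lemma algebraMap_hP : algebraMap (ZMod 2)[X] (RatFunc (ZMod 2)) hP
    = RatFunc.X ^ 3 + RatFunc.X + 1 := by
  simp [hP]

lemma algebraMap_gP : algebraMap (ZMod 2)[X] (RatFunc (ZMod 2)) gP
    = RatFunc.X ^ 4 + RatFunc.X ^ 3 + RatFunc.X ^ 2 + RatFunc.X + 1 := by
  simp [gP]

/-- The quadratic polynomial defining the function field. -/
noncomputable def fP : (RatFunc (ZMod 2))[X] :=
  X ^ 2 + C (algebraMap (ZMod 2)[X] _ hP) * X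
    - C (algebraMap (ZMod 2)[X] _ hP * algebraMap (ZMod 2)[X] _ gP)

local notation "L" => RatFunc (ZMod 2)
local notation "K" => AdjoinRoot fP
local notation "ι" => algebraMap (ZMod 2)[X] (RatFunc (ZMod 2))
local notation "y" => AdjoinRoot.root fP

lemma natDegree_fP : fP.natDegree = 2 := by unfold fP; compute_degree!
lemma monic_fP : fP.Monic := by unfold fP; monicity!

lemma eval₂_fP {S : Type*} [CommRing S] (i : L →+* S) (s : S) :
    eval₂ i s fP = s ^ 2 + i (ι hP) * s - i (ι hP * ι gP) := by
  simp only [fP, eval₂_sub, eval₂_add, eval₂_pow, eval₂_mul, eval₂_X, eval₂_C]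

lemma rel_root : y ^ 2 + algebraMap L K (ι hP) * y - algebraMap L K (ι hP * ι gP) = 0 := by
  have := AdjoinRoot.eval₂_root fP
  rwa [eval₂_fP] at this

lemma exists_coords (z : K) : ∃ a b : L, z = algebraMap L K a + algebraMap L K b * y := by
  obtain ⟨p, rfl⟩ := AdjoinRoot.mk_surjective z
  have h1 : (p %ₘ fP).natDegree ≤ 1 := by
    have := natDegree_modByMonic_lt p monic_fP (fun h => by simpa [h] using natDegree_fP)
    rw [natDegree_fP] at this
    omega
  obtain ⟨b, a, hab⟩ := exists_eq_X_add_C_of_natDegree_le_one h1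
  refine ⟨a, b, ?_⟩
  have h2 : AdjoinRoot.mk fP p = AdjoinRoot.mk fP (p %ₘ fP) := by
    conv_lhs => rw [← modByMonic_add_div p fP]
    simp
  rw [h2, hab, map_add, map_mul, AdjoinRoot.mk_C, AdjoinRoot.mk_C, AdjoinRoot.mk_X, add_comm]
  rfl

lemma coords_eq_zero (a b : L) (h : algebraMap L K a + algebraMap L K b * y = 0) :
    a = 0 ∧ b = 0 := by
  have h1 : AdjoinRoot.mk fP (C b * X + C a) = 0 := by
    rw [map_add, map_mul, AdjoinRoot.mk_C, AdjoinRoot.mk_C, AdjoinRoot.mk_X, add_comm]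
    exact h
  have h2 : C b * X + C a = 0 := by
    refine Polynomial.eq_zero_of_dvd_of_natDegree_lt (AdjoinRoot.mk_eq_zero.1 h1) ?_
    rw [natDegree_fP]
    exact natDegree_linear_le.trans_lt one_lt_two
  have h3 := congrArg (fun p => p.coeff 0) h2
  have h4 := congrArg (fun p => p.coeff 1) h2
  simp only [coeff_add, coeff_C_mul, coeff_X, coeff_C, coeff_zero] at h3 h4
  simpa using And.intro h3 h4

lemma isIntegral_root : IsIntegral (ZMod 2)[X] y := by
  refine ⟨X ^ 2 + C hP * X - C (hP * gP), by monicity!, ?_⟩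
  have := rel_root
  simpa only [eval₂_sub, eval₂_add, eval₂_pow, eval₂_mul, eval₂_X, eval₂_C, map_mul,
    IsScalarTower.algebraMap_apply (ZMod 2)[X] L K] using this

/-- The conjugation of the quadratic extension, `y ↦ -h - y`. -/
noncomputable def conj : K →ₐ[L] K :=
  AdjoinRoot.liftAlgHom fP (Algebra.ofId L K) (-algebraMap L K (ι hP) - y) (by
    have := rel_root
    rw [eval₂_fP]
    simp only [RingHom.coe_coe, Algebra.ofId_apply, map_mul] at this ⊢
    linear_combination this)

lemma conj_root : conj y = -algebraMap L K (ι hP) - y := AdjoinRoot.liftAlgHom_root ..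

variable [Fact (Irreducible fP)]

lemma exists_of_isIntegral {r : L} {z : K} (h : IsIntegral (ZMod 2)[X] z)
    (e : algebraMap L K r = z) : ∃ a, ι a = r := by
  subst e
  exact IsIntegrallyClosed.isIntegral_iff.1
    ((isIntegral_algebraMap_iff (algebraMap L K).injective).1 h)

/-- The integral closure of `𝔽₂[x]` is `𝔽₂[x] + 𝔽₂[x] y`. The trace, the norm and `h` times the first
coordinate of an integral element lie in `𝔽₂[x]`; divisibility by the prime `h = x³ + x + 1`, at which the
defining equation is Eisenstein, clears the denominators. -/
lemma exists_integral_coords (z : K) (hz : IsIntegral (ZMod 2)[X] z) :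
    ∃ a b : (ZMod 2)[X], z = algebraMap _ K a + algebraMap _ K b * y := by
  obtain ⟨a, b, rfl⟩ := exists_coords z
  have r := rel_root
  have hh : ι hP ≠ 0 := by simpa using hP_ne_zero
  have hy : IsIntegral (ZMod 2)[X] y := isIntegral_root
  have halg : ∀ a : (ZMod 2)[X], IsIntegral (ZMod 2)[X] (algebraMap L K (ι a)) := fun a => by
    rw [← IsScalarTower.algebraMap_apply (ZMod 2)[X] L K]
    exact isIntegral_algebraMap
  have hc := hz.map (conj.restrictScalars (ZMod 2)[X])
  have hc' : conj.restrictScalars (ZMod 2)[X] (algebraMap L K a + algebraMap L K b * y)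
      = algebraMap L K a + algebraMap L K b * (-algebraMap L K (ι hP) - y) := by
    rw [AlgHom.restrictScalars_apply, map_add, map_mul, AlgHom.commutes, AlgHom.commutes, conj_root]
  rw [hc'] at hc
  have two : (2 : L) = 0 := CharTwo.two_eq_zero
  have two' : (2 : K) = 0 := by rw [← map_ofNat (algebraMap L K) 2, two, map_zero]
  -- in characteristic `2` the trace of `a + b y` is `-h b`
  obtain ⟨β, hβ⟩ : ∃ β, ι β = ι hP * b := exists_of_isIntegral (hz.add hc).neg (by
    rw [map_mul]
    linear_combination algebraMap L K a * two')
  obtain ⟨α, hα⟩ : ∃ α, ι α = ι hP * a := exists_of_isIntegral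
      (((halg hP).mul hz).sub ((halg β).mul hy)) (by
    rw [hβ]
    simp only [map_mul]
    ring)
  obtain ⟨ν, hν⟩ : ∃ ν, ι ν = a ^ 2 - a * b * ι hP - b ^ 2 * (ι hP * ι gP) :=
    exists_of_isIntegral (hz.mul hc) (by
      simp only [map_mul, map_sub, map_pow] at r ⊢
      linear_combination algebraMap L K b ^ 2 * r)
  have e : α ^ 2 - hP * α * β - β ^ 2 * (hP * gP) = hP ^ 2 * ν := by
    apply IsFractionRing.injective (ZMod 2)[X] L
    simp only [map_sub, map_mul, map_pow, hα, hβ, hν]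
    ring
  obtain ⟨α, rfl⟩ : hP ∣ α := prime_hP.dvd_of_dvd_pow (n := 2)
    ⟨hP * ν + α * β + β ^ 2 * gP, by linear_combination e⟩
  obtain ⟨β, rfl⟩ : hP ∣ β := by
    have : hP ∣ β ^ 2 * gP := ⟨α ^ 2 - α * β - ν, mul_left_cancel₀ hP_ne_zero (by
      linear_combination -e)⟩
    exact prime_hP.dvd_of_dvd_pow ((prime_hP.dvd_or_dvd this).resolve_right not_hP_dvd_gP)
  refine ⟨α, β, ?_⟩
  rw [map_mul] at hα hβ
  rw [← mul_left_cancel₀ hh hα, ← mul_left_cancel₀ hh hβ]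
  simp only [IsScalarTower.algebraMap_apply (ZMod 2)[X] L K]

instance : Module.Finite L K := monic_fP.finite_adjoinRoot

instance : Algebra.IsSeparable L K := by
  have hsep : IsSeparable L y := by
    refine Separable.of_dvd (f := fP) ?_ (minpoly.dvd L y (by
      rw [aeval_def]; exact AdjoinRoot.eval₂_root fP))
    rw [separable_iff_derivative_ne_zero Fact.out]
    have hd : derivative fP = C (ι hP) := by
      have two : (2 : L) = 0 := CharTwo.two_eq_zero
      simp [fP, two, one_add_one_eq_two]
    rw [hd]
    simpa using hP_ne_zero
  rw [← separableClosure.eq_top_iff, eq_top_iff]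
  intro z _
  obtain ⟨a, b, rfl⟩ := exists_coords z
  exact add_mem (algebraMap_mem _ _) (mul_mem (algebraMap_mem _ _)
    (mem_separableClosure_iff.2 hsep))

lemma isQuadraticGenerator_root : IsQuadraticGenerator
    (R := FunctionField.ringOfIntegers (ZMod 2) K) ⟨y, isIntegral_root⟩ where
  rel := by
    apply Subtype.ext
    have := rel_root
    rw [map_mul] at this
    exact this
  span z := by
    obtain ⟨a, b, h⟩ := exists_integral_coords z.1 z.2
    exact ⟨a, b, Subtype.ext h⟩
  indep a b h := by
    have h1 := coords_eq_zero (ι a) (ι b) (congrArg Subtype.val h)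
    simpa using h1

end FunctionField

theorem class_group_statement_18
    (f : Polynomial (RatFunc (ZMod 2)))
    (hf : f = X ^ 2 + C (RatFunc.X ^ 3 + RatFunc.X + 1) * X - C ((RatFunc.X ^ 3 + RatFunc.X + 1) * (RatFunc.X ^ 4 + RatFunc.X ^ 3 + RatFunc.X ^ 2 + RatFunc.X + 1)))
    [Fact (Irreducible f)] :
    IsCyclic (ClassGroup (FunctionField.ringOfIntegers (ZMod 2) (AdjoinRoot f))) ∧
      Nat.card (ClassGroup (FunctionField.ringOfIntegers (ZMod 2) (AdjoinRoot f))) = 2 := by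
  obtain rfl : f = fP := by rw [hf, fP, algebraMap_hP, algebraMap_gP]
  have h := isQuadraticGenerator_root.card_classGroup
  exact ⟨isCyclic_of_prime_card (p := 2) h, h⟩
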